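/- arXiv:2107.10298 — 2 statements merged into one kernel-verified Lean document; each statement's English description precedes it below -/
import Mathlib

section
/- The critical determinant of the open unit cube C = (-1,1)^3 in R^3 equals 1, and every C-admissible lattice of covolume 1 contains one of the standard basis vectors e1, e2, e3 (Hajós–Minkowski theorem in dimension 3). -/
def latticeOf {n : ℕ} (M : Matrix (Fin n) (Fin n) ℝ) : Set (Fin n → ℝ) :=
  {x | ∃ k : Fin n → ℤ, x = M.mulVec fun i => (k i : ℝ)}

noncomputable def critDet {n : ℕ} (D : Set (Fin n → ℝ)) : ℝ :=
  sInf {d | ∃ M : Matrix (Fin n) (Fin n) ℝ, M.det ≠ 0 ∧ latticeOf M ∩ D = {0} ∧ d = |M.det|}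

open MeasureTheory
open scoped Pointwise

lemma lattice_data (M : Matrix (Fin 3) (Fin 3) ℝ) (hM : M.det ≠ 0) :
    ∃ (L : AddSubgroup (Fin 3 → ℝ)) (F : Set (Fin 3 → ℝ)), Countable L ∧
      (∀ x, x ∈ L ↔ x ∈ latticeOf M) ∧ MeasurableSet F ∧
      IsAddFundamentalDomain L F volume ∧ volume F = ENNReal.ofReal |M.det| := by
  have hu : IsUnit M := (Matrix.isUnit_iff_isUnit_det M).2 (isUnit_iff_ne_zero.2 hM)
  let b : Module.Basis (Fin 3) ℝ (Fin 3 → ℝ) :=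
    (Pi.basisFun ℝ (Fin 3)).map (M.toLinearEquiv' hu.invertible)
  have hb : ∀ i, b i = fun j => M j i := by
    intro i
    have : b i = Matrix.toLin' M (Pi.single i 1) := by
      simp only [b, Module.Basis.map_apply, Pi.basisFun_apply]
      rfl
    rw [this]
    ext j
    simp
  refine ⟨(Submodule.span ℤ (Set.range b)).toAddSubgroup, ZSpan.fundamentalDomain b,
    ?_, ?_, ZSpan.fundamentalDomain_measurableSet b, ZSpan.isAddFundamentalDomain' b _, ?_⟩
  · exact inferInstanceAs (Countable (Submodule.span ℤ (Set.range b)))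
  · intro x
    rw [Submodule.mem_toAddSubgroup, Submodule.mem_span_range_iff_exists_fun]
    constructor
    · rintro ⟨c, rfl⟩
      refine ⟨c, ?_⟩
      ext j
      simp [hb, Matrix.mulVec, dotProduct, mul_comm]
    · rintro ⟨c, rfl⟩
      refine ⟨c, ?_⟩
      ext j
      simp [hb, Matrix.mulVec, dotProduct, mul_comm]
  · rw [ZSpan.volume_fundamentalDomain]
    have : (Matrix.of b) = M.transpose := by
      ext i j
      simp [hb]
    rw [this, Matrix.det_transpose]

lemma minkowski_box (M : Matrix (Fin 3) (Fin 3) ℝ) (hM : M.det ≠ 0) (c : Fin 3 → ℝ)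
    (hc : ∀ i, 0 < c i) (h : |M.det| < ∏ i, c i) :
    ∃ x ∈ latticeOf M, x ≠ 0 ∧ ∀ i, |x i| < c i := by
  obtain ⟨L, F, hL, hmem, hFm, hF, hvol⟩ := lattice_data M hM
  have hs : volume (Set.pi Set.univ fun i => Set.Ioo (-c i) (c i))
      = ENNReal.ofReal (8 * ∏ i, c i) := by
    rw [Real.volume_pi_Ioo, ← ENNReal.ofReal_prod_of_nonneg]
    · congr 1
      simp [Fin.prod_univ_three]
      ring
    · intro i _
      have := hc i
      linarith
  obtain ⟨x, hx0, hx⟩ := exists_ne_zero_mem_lattice_of_measure_mul_two_pow_lt_measure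
    (s := Set.pi Set.univ fun i => Set.Ioo (-c i) (c i)) hF
    (by
      intro x hx i hi
      have := hx i hi
      simp only [Set.mem_Ioo, Pi.neg_apply] at this ⊢
      constructor <;> linarith [this.1, this.2])
    (convex_pi fun i _ => convex_Ioo _ _)
    (by
      rw [hs, hvol]
      have : (2 : ENNReal) ^ Module.finrank ℝ (Fin 3 → ℝ) = ENNReal.ofReal 8 := by
        simp
        norm_num
      rw [this, ← ENNReal.ofReal_mul (abs_nonneg _)]
      apply (ENNReal.ofReal_lt_ofReal_iff (by have := abs_nonneg M.det; linarith)).2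
      linarith)
  refine ⟨x, (hmem _).1 x.2, by simpa using hx0, fun i => ?_⟩
  have := hx i trivial
  exact abs_lt.2 this

lemma cube_fund (L : AddSubgroup (Fin 3 → ℝ)) (F : Set (Fin 3 → ℝ)) [Countable L]
    (hF : IsAddFundamentalDomain L F volume) (hv : volume F = 1) (hFm : MeasurableSet F)
    (hadm : ∀ x ∈ L, (∀ i, |x i| < 1) → x = 0) :
    IsAddFundamentalDomain L (Set.pi Set.univ fun _ : Fin 3 => Set.Ioc (0 : ℝ) 1) volume := by
  set Q : Set (Fin 3 → ℝ) := Set.pi Set.univ fun _ : Fin 3 => Set.Ioc (0 : ℝ) 1 with hQ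
  have hQm : MeasurableSet Q := MeasurableSet.univ_pi fun _ => measurableSet_Ioc
  have hQv : volume Q = 1 := by
    rw [hQ, Real.volume_pi_Ioc]
    simp
  have hdisj : Pairwise (fun g h : L => Disjoint (g +ᵥ Q) (h +ᵥ Q)) := by
    intro g h hgh
    rw [Set.disjoint_left]
    rintro x ⟨y, hy, rfl⟩ ⟨z, hz, hzy⟩
    apply hgh
    have hzy' : (h : Fin 3 → ℝ) + z = (g : Fin 3 → ℝ) + y := hzy
    have : (g : Fin 3 → ℝ) - h = 0 := by
      apply hadm _ (L.sub_mem g.2 h.2)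
      intro i
      have e := congrFun hzy' i
      have h1 := hy i trivial
      have h2 := hz i trivial
      simp only [Pi.add_apply, Pi.sub_apply, Set.mem_Ioc] at *
      rw [abs_lt]
      constructor <;> linarith [h1.1, h1.2, h2.1, h2.2]
    exact Subtype.ext (sub_eq_zero.1 this)
  have hmeas : ∀ g : L, MeasurableSet (g +ᵥ Q) := fun g => hQm.const_vadd g
  refine ⟨hQm.nullMeasurableSet, ?_, fun g h hgh => (hdisj hgh).aedisjoint⟩
  set U : Set (Fin 3 → ℝ) := ⋃ g : L, g +ᵥ Q with hU
  have hUm : MeasurableSet U := MeasurableSet.iUnion hmeas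
  have h1 : volume (U ∩ F) = 1 := by
    rw [hU, Set.iUnion_inter, measure_iUnion, ← hF.measure_eq_tsum, hQv]
    · intro g h hgh
      exact (hdisj hgh).mono Set.inter_subset_left Set.inter_subset_left
    · exact fun g => (hmeas g).inter hFm
  have h2 : volume (Uᶜ ∩ F) = 0 := by
    have := measure_inter_add_sdiff (μ := volume) F hUm
    rw [Set.inter_comm, h1, hv] at this
    have h3 : Uᶜ ∩ F = F \ U := by
      rw [Set.sdiff_eq, Set.inter_comm]
    rw [h3]
    exact (ENNReal.add_right_inj ENNReal.one_ne_top).1 (this.trans (add_zero 1).symm)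
  have hUinv : ∀ g : L, ∀ x, x ∈ U ↔ g +ᵥ x ∈ U := by
    intro g x
    simp only [hU, Set.mem_iUnion]
    constructor
    · rintro ⟨h, hx⟩
      refine ⟨g + h, ?_⟩
      rw [add_vadd]
      exact Set.vadd_mem_vadd_set hx
    · rintro ⟨h, hx⟩
      refine ⟨-g + h, ?_⟩
      rw [add_vadd, Set.mem_vadd_set_iff_neg_vadd_mem, neg_neg]
      exact hx
  have h3 : volume Uᶜ = 0 := by
    apply hF.measure_zero_of_invariant _ _ h2
    intro g
    ext x
    rw [Set.mem_vadd_set_iff_neg_vadd_mem, Set.mem_compl_iff, Set.mem_compl_iff, ← hUinv]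
  rw [ae_iff]
  apply measure_mono_null _ h3
  intro x hx hxU
  apply hx
  obtain ⟨g, hg⟩ := Set.mem_iUnion.1 hxU
  exact ⟨-g, (Set.mem_vadd_set_iff_neg_vadd_mem).1 hg⟩

lemma integral_zero (L : AddSubgroup (Fin 3 → ℝ)) [Countable L] (Q : Set (Fin 3 → ℝ))
    (hQ : IsAddFundamentalDomain L Q volume) (ξ : Fin 3 → ℝ) (hξ : ξ ≠ 0)
    (hint : ∀ x ∈ L, ∃ m : ℤ, ξ ⬝ᵥ x = m) :
    ∫ x in Q, Complex.exp (2 * Real.pi * Complex.I * ((ξ ⬝ᵥ x : ℝ) : ℂ)) = 0 := by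
  set f : (Fin 3 → ℝ) → ℂ :=
    fun x => Complex.exp (2 * Real.pi * Complex.I * ((ξ ⬝ᵥ x : ℝ) : ℂ)) with hf
  have hadd : ∀ x y, f (x + y) = f x * f y := by
    intro x y
    simp only [hf, dotProduct_add]
    rw [← Complex.exp_add]
    congr 1
    push_cast
    ring
  have hinv : ∀ (g : L) x, f (g +ᵥ x) = f x := by
    intro g x
    obtain ⟨m, hm⟩ := hint g g.2
    have : f g = 1 := by
      simp only [hf, hm]
      rw [Complex.exp_eq_one_iff]
      exact ⟨m, by push_cast; ring⟩
    change f ((g : Fin 3 → ℝ) + x) = f x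
    rw [hadd, this, one_mul]
  obtain ⟨a, ha⟩ : ∃ a, f a = -1 := by
    refine ⟨(1 / (2 * (ξ ⬝ᵥ ξ))) • ξ, ?_⟩
    have h0 : ξ ⬝ᵥ ξ ≠ 0 := by
      rwa [Ne, dotProduct_self_eq_zero]
    have : ξ ⬝ᵥ ((1 / (2 * (ξ ⬝ᵥ ξ))) • ξ) = 1 / 2 := by
      rw [dotProduct_smul, smul_eq_mul]
      field_simp
    simp only [hf, this]
    rw [← Complex.exp_pi_mul_I]
    congr 1
    push_cast
    ring
  have h2 := hQ.setIntegral_eq (hQ.vadd_of_comm a) hinv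
  have h3 : ∫ x in a +ᵥ Q, f x = ∫ x in Q, f (a +ᵥ x) :=
    (measurePreserving_vadd a volume).setIntegral_image_emb
      (measurableEmbedding_const_vadd a) _ _
  have h4 : ∫ x in Q, f (a +ᵥ x) = - ∫ x in Q, f x := by
    rw [← integral_neg]
    congr 1
    ext x
    rw [vadd_eq_add, hadd, ha]
    ring
  rw [h3, h4] at h2
  exact self_eq_neg.1 h2

lemma integral_unit_seg (t : ℝ)
    (h : ∫ x in Set.Ioc (0 : ℝ) 1, Complex.exp (2 * Real.pi * Complex.I * ((t * x : ℝ) : ℂ)) = 0) :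
    ∃ m : ℤ, m ≠ 0 ∧ t = m := by
  by_cases ht : t = 0
  · subst ht
    simp at h
  have hc : (2 * Real.pi * Complex.I * t : ℂ) ≠ 0 := by
    simp [ht, Real.pi_ne_zero]
  rw [← intervalIntegral.integral_of_le zero_le_one] at h
  have : (fun x : ℝ => Complex.exp (2 * Real.pi * Complex.I * ((t * x : ℝ) : ℂ))) =
      fun x : ℝ => Complex.exp ((2 * Real.pi * Complex.I * t) * x) := by
    ext x
    congr 1
    push_cast
    ring
  rw [this, integral_exp_mul_complex hc, div_eq_zero_iff] at h
  have h1 := h.resolve_right hc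
  simp only [Complex.ofReal_one, mul_one, Complex.ofReal_zero, mul_zero, Complex.exp_zero,
    sub_eq_zero] at h1
  obtain ⟨m, hm⟩ := Complex.exp_eq_one_iff.1 h1
  have hpi : (2 * Real.pi * Complex.I : ℂ) ≠ 0 := by
    simp [Real.pi_ne_zero]
  have h2 : (t : ℂ) = m := by
    apply mul_left_cancel₀ hpi
    rw [hm]
    ring
  have h3 : t = m := by exact_mod_cast h2
  refine ⟨m, ?_, h3⟩
  rintro rfl
  simp at h3
  exact ht h3

lemma dual_keller (M : Matrix (Fin 3) (Fin 3) ℝ) (hM : |M.det| = 1)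
    (hadm : ∀ x ∈ latticeOf M, (∀ i, |x i| < 1) → x = 0)
    (ξ : Fin 3 → ℝ) (hξ : ξ ≠ 0) (hint : ∀ x ∈ latticeOf M, ∃ m : ℤ, ξ ⬝ᵥ x = m) :
    ∃ i, ∃ m : ℤ, m ≠ 0 ∧ ξ i = m := by
  have hM0 : M.det ≠ 0 := by
    intro h
    simp [h] at hM
  obtain ⟨L, F, hL, hmem, hFm, hF, hvol⟩ := lattice_data M hM0
  rw [hM, ENNReal.ofReal_one] at hvol
  have hQ := cube_fund L F hF hvol hFm fun x hx => hadm x ((hmem x).1 hx)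
  have h := integral_zero L _ hQ ξ hξ fun x hx => hint x ((hmem x).1 hx)
  rw [volume_pi, Measure.restrict_pi_pi] at h
  have e : (fun x : Fin 3 → ℝ => Complex.exp (2 * Real.pi * Complex.I * ((ξ ⬝ᵥ x : ℝ) : ℂ))) =
      fun x => ∏ i, Complex.exp (2 * Real.pi * Complex.I * ((ξ i * x i : ℝ) : ℂ)) := by
    ext x
    rw [← Complex.exp_sum]
    congr 1
    rw [← Finset.mul_sum]
    simp [dotProduct]
  rw [e, integral_fintype_prod_eq_prod (𝕜 := ℂ)
    (f := fun i (x : ℝ) => Complex.exp (2 * Real.pi * Complex.I * ((ξ i * x : ℝ) : ℂ))),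
    Finset.prod_eq_zero_iff] at h
  obtain ⟨i, _, hi⟩ := h
  exact ⟨i, integral_unit_seg _ hi⟩

lemma keller (M : Matrix (Fin 3) (Fin 3) ℝ) (hM : |M.det| = 1)
    (hadm : ∀ x ∈ latticeOf M, (∀ i, |x i| < 1) → x = 0)
    (ξ : Fin 3 → ℝ) (hξ : ξ ≠ 0) (hmem : ξ ∈ latticeOf M) :
    ∃ i, ∃ m : ℤ, m ≠ 0 ∧ ξ i = m := by
  have hM0 : IsUnit M.det := by
    rw [isUnit_iff_ne_zero]
    intro h
    simp [h] at hM
  have key : ∀ x ∈ latticeOf M, ∀ y ∈ latticeOf (M⁻¹).transpose, ∃ m : ℤ, x ⬝ᵥ y = m := by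
    rintro x ⟨k, rfl⟩ y ⟨l, rfl⟩
    refine ⟨∑ i, k i * l i, ?_⟩
    rw [Matrix.mulVec_transpose, dotProduct_comm, ← Matrix.dotProduct_mulVec,
      Matrix.mulVec_mulVec, Matrix.nonsing_inv_mul _ hM0, Matrix.one_mulVec]
    simp [dotProduct, mul_comm]
  apply dual_keller (M⁻¹).transpose _ _ ξ hξ (key ξ hmem)
  · rw [Matrix.det_transpose, Matrix.det_nonsing_inv, Ring.inverse_eq_inv', abs_inv, hM, inv_one]
  · intro y hy hlt
    by_contra hy0
    obtain ⟨i, m, hm, hym⟩ := dual_keller M hM hadm y hy0 fun x hx => by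
      rw [dotProduct_comm]
      exact key x hx y hy
    have := hlt i
    rw [hym] at this
    have h1 : (1 : ℝ) ≤ |(m : ℝ)| := by
      exact_mod_cast Int.one_le_abs hm
    linarith

lemma latt_add {M : Matrix (Fin 3) (Fin 3) ℝ} {x y : Fin 3 → ℝ} (hx : x ∈ latticeOf M)
    (hy : y ∈ latticeOf M) : x + y ∈ latticeOf M := by
  obtain ⟨k, rfl⟩ := hx
  obtain ⟨l, rfl⟩ := hy
  refine ⟨k + l, ?_⟩
  rw [← Matrix.mulVec_add]
  congr 1
  ext i
  simp

lemma latt_neg {M : Matrix (Fin 3) (Fin 3) ℝ} {x : Fin 3 → ℝ} (hx : x ∈ latticeOf M) :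
    -x ∈ latticeOf M := by
  obtain ⟨k, rfl⟩ := hx
  refine ⟨-k, ?_⟩
  rw [← Matrix.mulVec_neg]
  congr 1
  ext i
  simp

lemma int_small {t : ℝ} {m : ℤ} (h : t = m) (h1 : |t| < 1) : t = 0 := by
  rw [h] at h1 ⊢
  have : |m| < 1 := by exact_mod_cast h1
  rw [Int.abs_lt_one_iff] at this
  simp [this]

lemma int_mid {t : ℝ} {m : ℤ} (h : t = m) (h0 : m ≠ 0) (h1 : |t| < 2) : t = 1 ∨ t = -1 := by
  rw [h] at h1 ⊢
  have : |m| < 2 := by exact_mod_cast h1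
  rw [abs_lt] at this
  have : m = 1 ∨ m = -1 := by omega
  rcases this with rfl | rfl <;> simp

/-- The pair argument, in coordinates. -/
lemma pair_arg {M : Matrix (Fin 3) (Fin 3) ℝ}
    (hK : ∀ x ∈ latticeOf M, x ≠ 0 → ∃ i, ∃ m : ℤ, m ≠ 0 ∧ x i = m)
    {u v : Fin 3 → ℝ} (hu : u ∈ latticeOf M) (hv : v ∈ latticeOf M) (i j k : Fin 3)
    (hall : ∀ l, l = i ∨ l = j ∨ l = k)
    (hui : u i = 1) (hvj : v j = 1) (huj : |u j| < 1) (hvi : |v i| < 1)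
    (huk : |u k| < 1) (hvk : |v k| < 1) : v i = 0 ∨ u j = 0 := by
  by_contra! hne
  obtain ⟨h1, h2⟩ := hne
  have bvi := abs_lt.1 hvi
  have buj := abs_lt.1 huj
  have buk := abs_lt.1 huk
  have bvk := abs_lt.1 hvk
  have hplus : u k + v k = 1 ∨ u k + v k = -1 := by
    obtain ⟨l, m, hm, hl⟩ := hK (u + v) (latt_add hu hv) (by
      intro h
      have := congrFun h i
      simp only [Pi.add_apply, Pi.zero_apply, hui] at this
      linarith)
    rw [Pi.add_apply] at hl
    rcases hall l with rfl | rfl | rfl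
    · exact absurd (int_small (m := m - 1) (by push_cast; linarith) hvi) h1
    · exact absurd (int_small (m := m - 1) (by push_cast; linarith) huj) h2
    · exact int_mid hl hm (abs_lt.2 ⟨by linarith, by linarith⟩)
  have hminus : u k - v k = 1 ∨ u k - v k = -1 := by
    obtain ⟨l, m, hm, hl⟩ := hK (u + -v) (latt_add hu (latt_neg hv)) (by
      intro h
      have := congrFun h i
      simp only [Pi.add_apply, Pi.neg_apply, Pi.zero_apply, hui] at this
      linarith)
    rw [Pi.add_apply, Pi.neg_apply] at hl
    rcases hall l with rfl | rfl | rfl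
    · exact absurd (int_small (m := 1 - m) (by push_cast; linarith) hvi) h1
    · exact absurd (int_small (m := m + 1) (by push_cast; linarith) huj) h2
    · exact int_mid (by linarith) hm (abs_lt.2 ⟨by linarith, by linarith⟩)
  rcases hplus with h | h <;> rcases hminus with h' | h' <;> linarith

lemma exists_face (M : Matrix (Fin 3) (Fin 3) ℝ) (hM : |M.det| = 1)
    (hK : ∀ x ∈ latticeOf M, x ≠ 0 → ∃ i, ∃ m : ℤ, m ≠ 0 ∧ x i = m) (i : Fin 3) :
    ∃ u ∈ latticeOf M, u i = 1 ∧ ∀ j, j ≠ i → |u j| < 1 := by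
  have hM0 : M.det ≠ 0 := by
    intro h
    simp [h] at hM
  obtain ⟨x, hx, hx0, hlt⟩ := minkowski_box M hM0 (Function.update 1 i 2)
    (by
      intro j
      by_cases h : j = i
      · subst h
        simp
      · simp [h])
    (by
      rw [hM, Finset.prod_update_of_mem (Finset.mem_univ i)]
      simp)
  have hoff : ∀ j, j ≠ i → |x j| < 1 := by
    intro j hj
    simpa [hj] using hlt j
  have hi : x i = 1 ∨ x i = -1 := by
    obtain ⟨l, m, hm, hl⟩ := hK x hx hx0
    by_cases h : l = i
    · subst h
      exact int_mid hl hm (by simpa using hlt l)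
    · have h0 := int_small hl (hoff l h)
      rw [h0] at hl
      exact absurd (by exact_mod_cast hl.symm) hm
  rcases hi with hi | hi
  · exact ⟨x, hx, hi, hoff⟩
  · refine ⟨-x, latt_neg hx, by simp [hi], fun j hj => ?_⟩
    simpa using hoff j hj

lemma hajos (M : Matrix (Fin 3) (Fin 3) ℝ) (hM : |M.det| = 1)
    (hadm : ∀ x ∈ latticeOf M, (∀ i, |x i| < 1) → x = 0) :
    ∃ i : Fin 3, (Pi.single i (1 : ℝ)) ∈ latticeOf M := by
  have hK : ∀ x ∈ latticeOf M, x ≠ 0 → ∃ i, ∃ m : ℤ, m ≠ 0 ∧ x i = m :=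
    fun x hx hx0 => keller M hM hadm x hx0 hx
  obtain ⟨u, hu, hu0, hu'⟩ := exists_face M hM hK 0
  obtain ⟨v, hv, hv1, hv'⟩ := exists_face M hM hK 1
  obtain ⟨w, hw, hw2, hw'⟩ := exists_face M hM hK 2
  have u1 := hu' 1 (by decide)
  have u2 := hu' 2 (by decide)
  have v0 := hv' 0 (by decide)
  have v2 := hv' 2 (by decide)
  have w0 := hw' 0 (by decide)
  have w1 := hw' 1 (by decide)
  have p1 := pair_arg hK hu hv 0 1 2 (by decide) hu0 hv1 u1 v0 u2 v2
  have p2 := pair_arg hK hv hw 1 2 0 (by decide) hv1 hw2 v2 w1 v0 w0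
  have p3 := pair_arg hK hw hu 2 0 1 (by decide) hw2 hu0 w0 u2 w1 u1
  by_cases hU : u 1 = 0 ∧ u 2 = 0
  · refine ⟨0, ?_⟩
    convert hu using 1
    ext j
    fin_cases j <;> simp [hU, hu0]
  by_cases hV : v 0 = 0 ∧ v 2 = 0
  · refine ⟨1, ?_⟩
    convert hv using 1
    ext j
    fin_cases j <;> simp [hV, hv1]
  by_cases hW : w 0 = 0 ∧ w 1 = 0
  · refine ⟨2, ?_⟩
    convert hw using 1
    ext j
    fin_cases j <;> simp [hW, hw2]
  exfalso
  obtain ⟨l, m, hm, hl⟩ := hK (u + v + w) (latt_add (latt_add hu hv) hw) (by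
    intro h
    have h0 := congrFun h 0
    have h1 := congrFun h 1
    have h2 := congrFun h 2
    simp only [Pi.add_apply, Pi.zero_apply, hu0, hv1, hw2] at h0 h1 h2
    have := abs_lt.1 u1
    have := abs_lt.1 u2
    have := abs_lt.1 v0
    have := abs_lt.1 v2
    have := abs_lt.1 w0
    have := abs_lt.1 w1
    grind)
  have hone : ∀ t : ℝ, |t| < 1 → t ≠ 0 → 1 + t ≠ m := by
    intro t ht ht0 h
    exact ht0 (int_small (m := m - 1) (by push_cast; linarith) ht)
  simp only [Pi.add_apply] at hl
  have a1 := hone _ u1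
  have a2 := hone _ u2
  have b1 := hone _ v0
  have b2 := hone _ v2
  have c1 := hone _ w0
  have c2 := hone _ w1
  fin_cases l <;> simp only [Fin.zero_eta, Fin.mk_one, Fin.reduceFinMk, hu0, hv1, hw2] at hl <;> grind

theorem stmt14 :
    critDet {x : Fin 3 → ℝ | ∀ i, |x i| < 1} = 1 ∧
    ∀ M : Matrix (Fin 3) (Fin 3) ℝ, |M.det| = 1 →
      latticeOf M ∩ {x : Fin 3 → ℝ | ∀ i, |x i| < 1} = {0} →
      ∃ i : Fin 3, (Pi.single i (1 : ℝ)) ∈ latticeOf M := by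
  constructor
  · apply IsLeast.csInf_eq
    constructor
    · refine ⟨1, by simp, ?_, by simp⟩
      ext x
      simp only [Set.mem_inter_iff, Set.mem_ofPred_eq, Set.mem_singleton_iff]
      constructor
      · rintro ⟨⟨k, rfl⟩, h⟩
        rw [Matrix.one_mulVec] at h ⊢
        ext i
        exact int_small (m := k i) rfl (h i)
      · rintro rfl
        exact ⟨⟨0, by ext i; simp [Matrix.mulVec, dotProduct]⟩, by simp⟩
    · rintro d ⟨M, hM, hadm, rfl⟩
      by_contra! hlt
      obtain ⟨x, hx, hx0, h⟩ := minkowski_box M hM 1 (by simp) (by simpa using hlt)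
      have : x ∈ ({0} : Set (Fin 3 → ℝ)) := hadm ▸ ⟨hx, h⟩
      exact hx0 this
  · intro M hM hadm
    apply hajos M hM
    intro x hx h
    have : x ∈ ({0} : Set (Fin 3 → ℝ)) := hadm ▸ ⟨hx, h⟩
    exact this
end

section
/- Let Λ = M Z^2 be a B-critical lattice of a bounded convex symmetric open set B ⊂ R^2 which is not a parallelogram. Then Λ ∩ ∂B consists of exactly six points, which can be written as ±p, ±q, ±r with p = q − r, and any two of p, q, r form a basis of Λ. -/
/-- The `ℤ`-span of two vectors in `ℝ²`. -/
def zspan (p q : Fin 2 → ℝ) : Set (Fin 2 → ℝ) :=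
  {x | ∃ a b : ℤ, x = a • p + b • q}

def IsParallelogram (B : Set (Fin 2 → ℝ)) : Prop :=
  ∃ g : Matrix (Fin 2) (Fin 2) ℝ, g.det ≠ 0 ∧
    B = g.mulVec '' {y : Fin 2 → ℝ | ∀ i, |y i| < 1}

def d2 (p q : Fin 2 → ℝ) : ℝ := p 0 * q 1 - p 1 * q 0

structure NormLike (N : (Fin 2 → ℝ) → ℝ) : Prop where
  add : ∀ x y, N (x + y) ≤ N x + N y
  smul : ∀ (c : ℝ) x, N (c • x) = |c| * N x

lemma d2_expand (p q z : Fin 2 → ℝ) (h : d2 p q ≠ 0) :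
    ∃ a b : ℝ, z = a • p + b • q := by
  refine ⟨d2 z q / d2 p q, d2 p z / d2 p q, ?_⟩
  ext i
  unfold d2 at h ⊢
  fin_cases i <;> simp only [Pi.add_apply, Pi.smul_apply, smul_eq_mul, Fin.zero_eta, Fin.mk_one] <;>
    rw [div_mul_eq_mul_div, div_mul_eq_mul_div, ← add_div, eq_div_iff h] <;> ring

lemma d2_unique (p q : Fin 2 → ℝ) (h : d2 p q ≠ 0) (a b c d : ℝ)
    (e : a • p + b • q = c • p + d • q) : a = c ∧ b = d := by
  have e0 := congrFun e 0
  have e1 := congrFun e 1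
  simp at e0 e1
  unfold d2 at h
  constructor
  · have : (a - c) * (p 0 * q 1 - p 1 * q 0) = 0 := by linear_combination q 1 * e0 - q 0 * e1
    rcases mul_eq_zero.1 this with h' | h'
    · linarith
    · exact absurd h' h
  · have : (b - d) * (p 0 * q 1 - p 1 * q 0) = 0 := by linear_combination p 0 * e1 - p 1 * e0
    rcases mul_eq_zero.1 this with h' | h'
    · linarith
    · exact absurd h' h

lemma NormLike.neg {N} (hN : NormLike N) (x) : N (-x) = N x := by
  have := hN.smul (-1) x
  simpa using this

lemma NormLike.zero {N} (hN : NormLike N) : N 0 = 0 := by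
  have := hN.smul 0 0
  simpa using this

lemma NormLike.nonneg {N} (hN : NormLike N) (x) : 0 ≤ N x := by
  have := hN.add x (-x)
  rw [hN.neg, add_neg_cancel, hN.zero] at this
  linarith

/-- key inequality for nonnegative coefficients -/
lemma l1_aux {N} (hN : NormLike N) (p q : Fin 2 → ℝ) (hp : N p = 1) (hq : N q = 1)
    (h : 2 ≤ N (p + q)) (a b : ℝ) (ha : 0 ≤ a) (hb : 0 ≤ b) : a + b ≤ N (a • p + b • q) := by
  rcases le_total b a with hab | hab
  · have h1 := hN.add (a • p + b • q) ((a - b) • q)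
    have e : (a • p + b • q) + ((a - b) • q) = a • (p + q) := by module
    rw [e, hN.smul, hN.smul, abs_of_nonneg ha, abs_of_nonneg (sub_nonneg.2 hab), hq] at h1
    nlinarith
  · have h1 := hN.add (a • p + b • q) ((b - a) • p)
    have e : (a • p + b • q) + ((b - a) • p) = b • (p + q) := by module
    rw [e, hN.smul, hN.smul, abs_of_nonneg hb, abs_of_nonneg (sub_nonneg.2 hab), hp] at h1
    nlinarith

lemma l1_eq {N} (hN : NormLike N) (p q : Fin 2 → ℝ) (hp : N p = 1) (hq : N q = 1)
    (h : 2 ≤ N (p + q)) (h' : 2 ≤ N (p - q)) (a b : ℝ) :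
    N (a • p + b • q) = |a| + |b| := by
  apply le_antisymm
  · have := hN.add (a • p) (b • q)
    rwa [hN.smul, hN.smul, hp, hq, mul_one, mul_one] at this
  have hq' : N (-q) = 1 := by rw [hN.neg, hq]
  have h'' : 2 ≤ N (p + -q) := by rwa [← sub_eq_add_neg]
  rcases le_total 0 a with ha | ha <;> rcases le_total 0 b with hb | hb
  · rw [abs_of_nonneg ha, abs_of_nonneg hb]
    exact l1_aux hN p q hp hq h a b ha hb
  · rw [abs_of_nonneg ha, abs_of_nonpos hb]
    have := l1_aux hN p (-q) hp hq' h'' a (-b) ha (by linarith)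
    have e : a • p + -b • -q = a • p + b • q := by module
    rwa [e] at this
  · rw [abs_of_nonpos ha, abs_of_nonneg hb]
    have := l1_aux hN p (-q) hp hq' h'' (-a) b (by linarith) hb
    have e : -a • p + b • -q = -(a • p + b • q) := by module
    rwa [e, hN.neg] at this
  · rw [abs_of_nonpos ha, abs_of_nonpos hb]
    have := l1_aux hN p q hp hq h (-a) (-b) (by linarith) (by linarith)
    have e : -a • p + -b • q = -(a • p + b • q) := by module
    rwa [e, hN.neg] at this

lemma basis_of {N} (hN : NormLike N) (L : Set (Fin 2 → ℝ))
    (hL : ∀ x ∈ L, ∀ y ∈ L, ∀ a b : ℤ, a • x + b • y ∈ L)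
    (hadm : ∀ x ∈ L, x ≠ 0 → 1 ≤ N x)
    (hnp : ¬ ∃ p q : Fin 2 → ℝ, d2 p q ≠ 0 ∧ ∀ a b : ℝ, N (a • p + b • q) = |a| + |b|)
    (p q : Fin 2 → ℝ) (hp : p ∈ L) (hq : q ∈ L) (Np : N p = 1) (Nq : N q = 1)
    (hd : d2 p q ≠ 0) : L = zspan p q := by
  ext z
  constructor
  swap
  · rintro ⟨a, b, rfl⟩
    exact hL p hp q hq a b
  intro hz
  obtain ⟨a, b, e⟩ := d2_expand p q z hd
  have ha := abs_sub_round a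
  have hb := abs_sub_round b
  set s := a - round a with hs
  set t := b - round b with ht
  have hw : s • p + t • q ∈ L := by
    have h1 := hL z hz _ (hL p hp q hq (-round a) (-round b)) 1 1
    convert h1 using 1
    rw [e, hs, ht]
    simp only [← Int.cast_smul_eq_zsmul ℝ]
    push_cast
    module
  have hle : N (s • p + t • q) ≤ |s| + |t| := by
    have := hN.add (s • p) (t • q)
    rwa [hN.smul, hN.smul, Np, Nq, mul_one, mul_one] at this
  by_cases hw0 : s • p + t • q = 0
  · have := d2_unique p q hd s t 0 0 (by simpa using hw0)
    refine ⟨round a, round b, ?_⟩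
    simp only [← Int.cast_smul_eq_zsmul ℝ]
    rw [e, show a = round a by linarith [this.1], show b = round b by linarith [this.2]]
    simp
  exfalso
  have h1 := hadm _ hw hw0
  have hs2 : |s| = 1/2 := by linarith
  have ht2 : |t| = 1/2 := by linarith
  -- all four half points are lattice points
  have key : ∀ m n : ℤ, 1 ≤ N ((s + m) • p + (t + n) • q) := by
    intro m n
    apply hadm
    · have h1 := hL _ hw _ (hL p hp q hq m n) 1 1
      convert h1 using 1
      simp only [← Int.cast_smul_eq_zsmul ℝ]
      push_cast
      module
    · intro h0
      have := (d2_unique p q hd (s + m) (t + n) 0 0 (by simpa using h0)).1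
      rcases abs_eq (by norm_num : (0:ℝ) ≤ 1/2) |>.1 hs2 with h | h
      · have h3 : ((2 * m + 1 : ℤ) : ℝ) = 0 := by push_cast; linarith
        have := Int.cast_eq_zero.1 h3
        omega
      · have h3 : ((2 * m - 1 : ℤ) : ℝ) = 0 := by push_cast; linarith
        have := Int.cast_eq_zero.1 h3
        omega
  have half : ∀ x : Fin 2 → ℝ, 1 ≤ N ((1/2 : ℝ) • x) → 2 ≤ N x := by
    intro x hx
    rw [hN.smul, abs_of_pos (by norm_num)] at hx
    linarith
  have k2 : 2 ≤ N (p + q) ∧ 2 ≤ N (p - q) := by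
    have hs' : ∃ m : ℤ, s + m = 1/2 := by
      rcases abs_eq (by norm_num : (0:ℝ) ≤ 1/2) |>.1 hs2 with h | h
      · exact ⟨0, by rw [h]; norm_num⟩
      · exact ⟨1, by rw [h]; norm_num⟩
    have ht' : (∃ n : ℤ, t + n = 1/2) ∧ (∃ n : ℤ, t + n = -(1/2)) := by
      rcases abs_eq (by norm_num : (0:ℝ) ≤ 1/2) |>.1 ht2 with h | h
      · exact ⟨⟨0, by rw [h]; norm_num⟩, ⟨-1, by rw [h]; norm_num⟩⟩
      · exact ⟨⟨1, by rw [h]; norm_num⟩, ⟨0, by rw [h]; norm_num⟩⟩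
    obtain ⟨m, hm⟩ := hs'
    obtain ⟨⟨n, hn⟩, n', hn'⟩ := ht'
    constructor
    · apply half
      have := key m n
      rw [hm, hn] at this
      convert this using 2
      module
    · apply half
      have := key m n'
      rw [hm, hn'] at this
      convert this using 2
      module
  exact hnp ⟨p, q, hd, l1_eq hN p q Np Nq k2.1 k2.2⟩

lemma par_of {N : (Fin 2 → ℝ) → ℝ} (B : Set (Fin 2 → ℝ)) (hB : ∀ x, x ∈ B ↔ N x < 1)
    (hnpar : ¬ IsParallelogram B) :
    ¬ ∃ p q : Fin 2 → ℝ, d2 p q ≠ 0 ∧ ∀ a b : ℝ, N (a • p + b • q) = |a| + |b| := by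
  rintro ⟨p, q, hd, h⟩
  apply hnpar
  refine ⟨!![(p 0 + q 0)/2, (p 0 - q 0)/2; (p 1 + q 1)/2, (p 1 - q 1)/2], ?_, ?_⟩
  · rw [Matrix.det_fin_two_of]
    unfold d2 at hd
    intro h0
    apply hd
    linarith
  have key : ∀ y : Fin 2 → ℝ, (!![(p 0 + q 0)/2, (p 0 - q 0)/2; (p 1 + q 1)/2, (p 1 - q 1)/2]).mulVec y
      = ((y 0 + y 1)/2) • p + ((y 0 - y 1)/2) • q := by
    intro y
    ext i
    fin_cases i <;> simp [Matrix.mulVec, dotProduct, Fin.sum_univ_two] <;> ring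
  ext z
  rw [hB]
  constructor
  · intro hz
    obtain ⟨a, b, rfl⟩ := d2_expand p q z hd
    rw [h] at hz
    refine ⟨![a + b, a - b], ?_, ?_⟩
    · intro i
      have := abs_add_le a b
      have := abs_sub a b
      fin_cases i
      · exact lt_of_le_of_lt (abs_add_le a b) hz
      · exact lt_of_le_of_lt (abs_sub a b) hz
    · rw [key]
      simp only [Matrix.cons_val_zero, Matrix.cons_val_one]
      module
  · rintro ⟨y, hy, rfl⟩
    rw [key, h]
    have h0 := abs_lt.1 (hy 0)
    have h1 := abs_lt.1 (hy 1)
    rcases abs_cases ((y 0 + y 1)/2) with ⟨e, _⟩ | ⟨e, _⟩ <;>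
    rcases abs_cases ((y 0 - y 1)/2) with ⟨e', _⟩ | ⟨e', _⟩ <;> rw [e, e'] <;> linarith

open Filter Topology in
lemma perturb (B : Set (Fin 2 → ℝ)) (hbdd : Bornology.IsBounded B) (h0 : (0 : Fin 2 → ℝ) ∈ B)
    (M : Matrix (Fin 2) (Fin 2) ℝ) (hM : M.det ≠ 0)
    (hadm : latticeOf M ∩ B = {0}) (hcrit : |M.det| = critDet B)
    (A : ℝ → Matrix (Fin 2) (Fin 2) ℝ) (hA : Continuous A) (hA0 : A 0 = 1)
    (hdet : ∀ t, 0 < t → (A t).det < 1)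
    (hk : ∀ k ∈ latticeOf M, k ∈ closure B → k ≠ 0 → ∀ t, 0 < t → (A t).mulVec k ∉ B) : False := by
  have hA' : Tendsto A (𝓝[>] 0) (𝓝 1) := by
    rw [← hA0]
    exact hA.continuousAt.tendsto.mono_left nhdsWithin_le_nhds
  obtain ⟨R, hR⟩ := hbdd.subset_closedBall 0
  -- finitely many small points
  have hfin : {k : Fin 2 → ℤ | ‖M.mulVec (fun i => (k i : ℝ))‖ ≤ 2 * R}.Finite := by
    have hinj : M⁻¹ * M = 1 := Matrix.nonsing_inv_mul M (Ne.isUnit hM)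
    let T := LinearMap.toContinuousLinearMap (Matrix.toLin' M⁻¹)
    have hsub : {k : Fin 2 → ℤ | ‖M.mulVec (fun i => (k i : ℝ))‖ ≤ 2 * R} ⊆
        Metric.closedBall 0 (‖T‖ * (2 * R)) := by
      intro k hk
      have e : T (M.mulVec (fun i => (k i : ℝ))) = fun i => (k i : ℝ) := by
        change M⁻¹.mulVec _ = _
        rw [Matrix.mulVec_mulVec, hinj, Matrix.one_mulVec]
      have h1 := T.le_opNorm (M.mulVec (fun i => (k i : ℝ)))
      rw [e] at h1
      have h2 : ‖(fun i => (k i : ℝ))‖ ≤ ‖T‖ * (2 * R) :=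
        h1.trans (mul_le_mul_of_nonneg_left hk (norm_nonneg _))
      have hnn : 0 ≤ ‖T‖ * (2 * R) := (norm_nonneg _).trans h2
      rw [mem_closedBall_zero_iff, pi_norm_le_iff_of_nonneg hnn]
      intro i
      have := norm_le_pi_norm (fun i => (k i : ℝ)) i
      simpa [Int.norm_eq_abs] using this.trans h2
    exact (isCompact_closedBall _ _).finite_of_discrete.subset hsub
  have hmv : ∀ z : Fin 2 → ℝ, Tendsto (fun t => (A t).mulVec z) (𝓝[>] 0) (𝓝 z) := by
    intro z
    have : Continuous (fun t => (A t).mulVec z) := hA.matrix_mulVec continuous_const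
    have h2 := this.continuousAt.tendsto (x := 0)
    simp only [hA0, Matrix.one_mulVec] at h2
    exact h2.mono_left nhdsWithin_le_nhds
  have hdet' : Tendsto (fun t => (A t).det) (𝓝[>] 0) (𝓝 1) := by
    have : Continuous (fun t => (A t).det) := hA.matrix_det
    have h2 := this.continuousAt.tendsto (x := 0)
    simp only [hA0, Matrix.det_one] at h2
    exact h2.mono_left nhdsWithin_le_nhds
  have ev1 : ∀ᶠ t in 𝓝[>] (0:ℝ), 0 < (A t).det := hdet'.eventually (lt_mem_nhds one_pos)
  have ev0 : ∀ᶠ t in 𝓝[>] (0:ℝ), 0 < t := self_mem_nhdsWithin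
  have ev2 : ∀ᶠ t in 𝓝[>] (0:ℝ), ∀ k ∈ {k : Fin 2 → ℤ | ‖M.mulVec (fun i => (k i : ℝ))‖ ≤ 2 * R},
      M.mulVec (fun i => (k i : ℝ)) ≠ 0 → (A t).mulVec (M.mulVec (fun i => (k i : ℝ))) ∉ B := by
    rw [eventually_all_finite hfin]
    intro k _
    by_cases hz : M.mulVec (fun i => (k i : ℝ)) = 0
    · simp [hz]
    by_cases hc : M.mulVec (fun i => (k i : ℝ)) ∈ closure B
    · filter_upwards [ev0] with t ht _
      exact hk _ ⟨k, rfl⟩ hc hz t ht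
    · have := (hmv _).eventually (isClosed_closure.isOpen_compl.mem_nhds hc)
      filter_upwards [this] with t ht _ hB
      exact ht (subset_closure hB)
  have ev3 : ∀ᶠ t in 𝓝[>] (0:ℝ), ∀ z : Fin 2 → ℝ, ‖(A t).mulVec z - z‖ ≤ ‖z‖ / 2 := by
    have hent : ∀ i j, ∀ᶠ t in 𝓝[>] (0:ℝ), |A t i j - (1 : Matrix (Fin 2) (Fin 2) ℝ) i j| < 1/4 := by
      intro i j
      have : Tendsto (fun t => A t i j) (𝓝[>] 0) (𝓝 ((1 : Matrix (Fin 2) (Fin 2) ℝ) i j)) :=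
        ((continuous_apply_apply i j).tendsto _).comp hA'
      have := Metric.tendsto_nhds.1 this (1/4) (by norm_num)
      simpa [Real.dist_eq] using this
    filter_upwards [hent 0 0, hent 0 1, hent 1 0, hent 1 1] with t h00 h01 h10 h11 z
    rw [pi_norm_le_iff_of_nonneg (by positivity)]
    have hz0 : |z 0| ≤ ‖z‖ := norm_le_pi_norm z 0
    have hz1 : |z 1| ≤ ‖z‖ := norm_le_pi_norm z 1
    have gen : ∀ a b : ℝ, |a| < 1/4 → |b| < 1/4 → |a * z 0 + b * z 1| ≤ ‖z‖ / 2 := by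
      intro a b ha hb
      have h1 := abs_add_le (a * z 0) (b * z 1)
      rw [abs_mul, abs_mul] at h1
      have h2 : |a| * |z 0| ≤ 1/4 * ‖z‖ :=
        mul_le_mul ha.le hz0 (abs_nonneg _) (by norm_num)
      have h3 : |b| * |z 1| ≤ 1/4 * ‖z‖ :=
        mul_le_mul hb.le hz1 (abs_nonneg _) (by norm_num)
      linarith
    intro i
    fin_cases i
    · have := gen _ _ h00 h01
      rw [Real.norm_eq_abs]
      convert this using 2
      simp [Matrix.mulVec, dotProduct, Fin.sum_univ_two]
      ring
    · have := gen _ _ h10 h11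
      rw [Real.norm_eq_abs]
      convert this using 2
      simp [Matrix.mulVec, dotProduct, Fin.sum_univ_two]
      ring
  obtain ⟨t, ht0, ht1, ht2, ht3⟩ := (ev0.and (ev1.and (ev2.and ev3))).exists
  have hlt : |(A t * M).det| < |M.det| := by
    rw [Matrix.det_mul, abs_mul, abs_of_pos ht1]
    have := abs_pos.2 hM
    nlinarith [hdet t ht0]
  have hge : critDet B ≤ |(A t * M).det| := by
    apply csInf_le
    · refine ⟨0, ?_⟩
      rintro d ⟨_, _, _, rfl⟩
      exact abs_nonneg _
    refine ⟨A t * M, ?_, ?_, rfl⟩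
    · rw [Matrix.det_mul]
      exact mul_ne_zero ht1.ne' hM
    ext z
    constructor
    · rintro ⟨⟨k, rfl⟩, hz⟩
      rw [← Matrix.mulVec_mulVec] at hz ⊢
      by_cases hz0 : M.mulVec (fun i => (k i : ℝ)) = 0
      · simp [hz0]
      exfalso
      by_cases hs : ‖M.mulVec (fun i => (k i : ℝ))‖ ≤ 2 * R
      · exact ht2 k hs hz0 hz
      · have h1 := ht3 (M.mulVec (fun i => (k i : ℝ)))
        have h2 := mem_closedBall_zero_iff.1 (hR hz)
        have h3 := norm_sub_norm_le (M.mulVec (fun i => (k i : ℝ)))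
          ((A t).mulVec (M.mulVec (fun i => (k i : ℝ))))
        rw [norm_sub_rev] at h3
        linarith
    · rintro rfl
      refine ⟨⟨0, ?_⟩, h0⟩
      ext i
      simp [Matrix.mulVec, dotProduct]
  linarith

lemma exists_third (B : Set (Fin 2 → ℝ)) (hopen : IsOpen B) (hconv : Convex ℝ B)
    (hsymm : ∀ x ∈ B, -x ∈ B) (hbdd : Bornology.IsBounded B) (h0 : (0 : Fin 2 → ℝ) ∈ B)
    (M : Matrix (Fin 2) (Fin 2) ℝ) (hM : M.det ≠ 0)
    (hadm : latticeOf M ∩ B = {0}) (hcrit : |M.det| = critDet B)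
    (p q : Fin 2 → ℝ) (hd : d2 p q ≠ 0) (hp : p ∉ B) (hq : q ∉ B) :
    ∃ z ∈ latticeOf M, z ∈ closure B ∧ z ≠ 0 ∧ z ≠ p ∧ z ≠ -p ∧ z ≠ q ∧ z ≠ -q := by
  by_contra! hcon
  obtain ⟨f, hf⟩ := geometric_hahn_banach_open_point hconv hopen hp
  obtain ⟨g, hg⟩ := geometric_hahn_banach_open_point hconv hopen hq
  have hfp : 0 < f p := by simpa using hf 0 h0
  have hgq : 0 < g q := by simpa using hg 0 h0
  set α := f q / f p with hα
  set β := g p / g q with hβ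
  have hα' : α * f p = f q := div_mul_cancel₀ _ hfp.ne'
  have hβ' : β * g q = g p := div_mul_cancel₀ _ hgq.ne'
  obtain ⟨c, d, hcd⟩ : ∃ c d : ℝ, ∀ t, 0 < t →
      (1 - c * t * α) * (1 - d * t * β) - (d * t) * (c * t) < 1 := by
    by_cases ha : α = 0
    · by_cases hb : β = 0
      · refine ⟨1, 1, fun t ht => ?_⟩
        rw [ha, hb]
        nlinarith
      · refine ⟨0, β, fun t ht => ?_⟩
        have : 0 < β * β := mul_self_pos.2 hb
        nlinarith
    · refine ⟨α, 0, fun t ht => ?_⟩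
      have : 0 < α * α := mul_self_pos.2 ha
      nlinarith
  set P : Matrix (Fin 2) (Fin 2) ℝ := !![p 0, q 0; p 1, q 1] with hP
  have hPd : P.det ≠ 0 := by
    rw [hP, Matrix.det_fin_two_of]
    unfold d2 at hd
    intro h
    apply hd
    linarith
  have hPi : P⁻¹ * P = 1 := Matrix.nonsing_inv_mul P (Ne.isUnit hPd)
  have hPi' : P * P⁻¹ = 1 := Matrix.mul_nonsing_inv P (Ne.isUnit hPd)
  let C : ℝ → Matrix (Fin 2) (Fin 2) ℝ := fun t => !![1 - c * t * α, d * t; c * t, 1 - d * t * β]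
  have hP0 : P.mulVec ![1, 0] = p := by
    ext i
    fin_cases i <;> simp [hP]
  have hP1 : P.mulVec ![0, 1] = q := by
    ext i
    fin_cases i <;> simp [hP]
  have hPi0 : P⁻¹.mulVec p = ![1, 0] := by
    rw [← hP0, Matrix.mulVec_mulVec, hPi, Matrix.one_mulVec]
  have hPi1 : P⁻¹.mulVec q = ![0, 1] := by
    rw [← hP1, Matrix.mulVec_mulVec, hPi, Matrix.one_mulVec]
  have hAp : ∀ t, (P * C t * P⁻¹).mulVec p = p + (c * t) • (q - α • p) := by
    intro t
    rw [← Matrix.mulVec_mulVec, ← Matrix.mulVec_mulVec, hPi0]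
    ext i
    fin_cases i <;> simp [hP, C, Matrix.vecHead, Matrix.vecTail] <;> ring
  have hAq : ∀ t, (P * C t * P⁻¹).mulVec q = q + (d * t) • (p - β • q) := by
    intro t
    rw [← Matrix.mulVec_mulVec, ← Matrix.mulVec_mulVec, hPi1]
    ext i
    fin_cases i <;> simp [hP, C, Matrix.vecHead, Matrix.vecTail] <;> ring
  have hnp : ∀ t, (P * C t * P⁻¹).mulVec p ∉ B := by
    intro t hB
    have := hf _ hB
    rw [hAp] at this
    simp [hα'] at this
  have hnq : ∀ t, (P * C t * P⁻¹).mulVec q ∉ B := by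
    intro t hB
    have := hg _ hB
    rw [hAq] at this
    simp [hβ'] at this
  refine perturb B hbdd h0 M hM hadm hcrit (fun t => P * C t * P⁻¹) ?_ ?_ ?_ ?_
  · have hC : Continuous C := by
      refine continuous_matrix fun i j => ?_
      fin_cases i <;> fin_cases j <;> simp [C] <;> fun_prop
    fun_prop
  · have : C 0 = 1 := by
      ext i j
      fin_cases i <;> fin_cases j <;> simp [C]
    simp [this, hPi']
  · intro t ht
    have e : (P * C t * P⁻¹).det = (C t).det := by
      have h1 : P.det * P⁻¹.det = 1 := by rw [← Matrix.det_mul, hPi', Matrix.det_one]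
      rw [Matrix.det_mul, Matrix.det_mul]
      linear_combination (C t).det * h1
    show (P * C t * P⁻¹).det < 1
    rw [e, Matrix.det_fin_two_of]
    exact hcd t ht
  · intro k hk hkc hk0 t ht
    by_cases e1 : k = p
    · subst e1; exact hnp t
    by_cases e2 : k = -p
    · subst e2
      intro hB
      apply hnp t
      have := hsymm _ hB
      simpa [Matrix.mulVec_neg] using this
    by_cases e3 : k = q
    · subst e3; exact hnq t
    have e4 := hcon k hk hkc hk0 e1 e2 e3
    subst e4
    intro hB
    apply hnq t
    have := hsymm _ hB
    simpa [Matrix.mulVec_neg] using this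

lemma exists_pair (B : Set (Fin 2 → ℝ)) (hbdd : Bornology.IsBounded B) (h0 : (0 : Fin 2 → ℝ) ∈ B)
    (M : Matrix (Fin 2) (Fin 2) ℝ) (hM : M.det ≠ 0)
    (hadm : latticeOf M ∩ B = {0}) (hcrit : |M.det| = critDet B) :
    ∃ p ∈ latticeOf M, ∃ q ∈ latticeOf M, p ∈ closure B ∧ q ∈ closure B ∧ d2 p q ≠ 0 := by
  by_contra! hcon
  obtain ⟨x, hx0, hx⟩ : ∃ x : Fin 2 → ℝ, x ≠ 0 ∧ ∀ k ∈ latticeOf M, k ∈ closure B → d2 x k = 0 := by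
    by_cases h : ∃ x ∈ latticeOf M, x ∈ closure B ∧ x ≠ 0
    · obtain ⟨x, h1, h2, h3⟩ := h
      exact ⟨x, h3, fun k hk hkc => hcon x h1 k hk h2 hkc⟩
    · push Not at h
      refine ⟨![1, 0], ?_, fun k hk hkc => ?_⟩
      · intro h
        have := congrFun h 0
        simp at this
      · rw [h k hk hkc]
        simp [d2]
  have hs : 0 < x 0 ^ 2 + x 1 ^ 2 := by
    rcases eq_or_ne (x 0) 0 with h | h
    · have : x 1 ≠ 0 := by
        intro h'
        apply hx0
        ext i
        fin_cases i
        · exact h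
        · exact h'
      positivity
    · positivity
  set s := x 0 ^ 2 + x 1 ^ 2 with hsdef
  let A : ℝ → Matrix (Fin 2) (Fin 2) ℝ := fun t =>
    !![1 - t * (x 1 * x 1 / s), t * (x 0 * x 1 / s); t * (x 0 * x 1 / s), 1 - t * (x 0 * x 0 / s)]
  refine perturb B hbdd h0 M hM hadm hcrit A ?_ ?_ ?_ ?_
  · refine continuous_matrix fun i j => ?_
    fin_cases i <;> fin_cases j <;> simp [A] <;> fun_prop
  · ext i j
    fin_cases i <;> fin_cases j <;> simp [A]
  · intro t ht
    have : (A t).det = 1 - t := by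
      simp only [A]
      rw [Matrix.det_fin_two_of]
      field_simp
      rw [hsdef]
      ring
    linarith
  · intro k hk hkc hk0 t ht hB
    have e : (A t).mulVec k = k := by
      have h1 := hx k hk hkc
      unfold d2 at h1
      ext i
      fin_cases i
      · simp [A, Matrix.mulVec, dotProduct, Fin.sum_univ_two]
        field_simp
        linear_combination t * x 1 * h1
      · simp [A, Matrix.mulVec, dotProduct, Fin.sum_univ_two]
        field_simp
        linear_combination - t * x 0 * h1
    rw [e] at hB
    have : k ∈ latticeOf M ∩ B := ⟨hk, hB⟩
    rw [hadm] at this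
    exact hk0 this

lemma zspan_left (x y : Fin 2 → ℝ) : x ∈ zspan x y := ⟨1, 0, by simp⟩

lemma zspan_right (x y : Fin 2 → ℝ) : y ∈ zspan x y := ⟨0, 1, by simp⟩

lemma coeff_one {N} (hN : NormLike N) (L : Set (Fin 2 → ℝ))
    (hbas : ∀ p ∈ L, ∀ q ∈ L, N p = 1 → N q = 1 → d2 p q ≠ 0 → L = zspan p q)
    (x y : Fin 2 → ℝ) (hx : x ∈ L) (hy : y ∈ L) (Nx : N x = 1) (Ny : N y = 1)
    (hd : d2 x y ≠ 0) (a b : ℤ) (hz : a • x + b • y ∈ L) (Nz : N (a • x + b • y) = 1)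
    (hb : b ≠ 0) : b = 1 ∨ b = -1 := by
  have hd' : d2 x (a • x + b • y) ≠ 0 := by
    have : d2 x (a • x + b • y) = b * d2 x y := by
      simp [d2]
      ring
    rw [this]
    exact mul_ne_zero (Int.cast_ne_zero.2 hb) hd
  have h1 := hbas x hx _ hz Nx Nz hd'
  have h2 : y ∈ zspan x (a • x + b • y) := h1 ▸ hy
  obtain ⟨m, n, e⟩ := h2
  have e' : (0:ℝ) • x + (1:ℝ) • y = ((m + n * a : ℤ) : ℝ) • x + ((n * b : ℤ) : ℝ) • y := by
    simp only [← Int.cast_smul_eq_zsmul ℝ] at e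
    rw [zero_smul, one_smul, zero_add]
    refine e.trans ?_
    push_cast
    module
  have h3 := (d2_unique x y hd _ _ _ _ e').2
  have h4 : n * b = 1 := by exact_mod_cast h3.symm
  exact Int.eq_one_or_neg_one_of_mul_eq_one' h4 |>.imp (·.2) (·.2)

/-- classification of boundary points relative to a basis of boundary points -/
lemma classify {N} (hN : NormLike N) (L : Set (Fin 2 → ℝ))
    (hbas : ∀ p ∈ L, ∀ q ∈ L, N p = 1 → N q = 1 → d2 p q ≠ 0 → L = zspan p q)
    (x y : Fin 2 → ℝ) (hx : x ∈ L) (hy : y ∈ L) (Nx : N x = 1) (Ny : N y = 1)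
    (hd : d2 x y ≠ 0) (z : Fin 2 → ℝ) (hz : z ∈ L) (Nz : N z = 1) :
    z = x ∨ z = -x ∨ z = y ∨ z = -y ∨ z = x + y ∨ z = -(x + y) ∨ z = x - y ∨ z = -(x - y) := by
  have hL := hbas x hx y hy Nx Ny hd
  have hz' : z ∈ zspan x y := hL ▸ hz
  obtain ⟨a, b, e⟩ := hz'
  have hdyx : d2 y x ≠ 0 := by
    intro h
    apply hd
    unfold d2 at h ⊢
    linarith
  have unit : ∀ (n : ℤ) (w : Fin 2 → ℝ), N w = 1 → N (n • w) = 1 → n = 1 ∨ n = -1 := by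
    intro n w hw hnw
    rw [← Int.cast_smul_eq_zsmul ℝ, hN.smul, hw, mul_one] at hnw
    have : |n| = 1 := by exact_mod_cast hnw
    exact (abs_eq (by norm_num)).1 this
  by_cases hb : b = 0
  · subst hb
    simp only [zero_smul, add_zero] at e
    rcases unit a x Nx (e ▸ Nz) with rfl | rfl <;> simp [e]
  by_cases ha : a = 0
  · subst ha
    simp only [zero_smul, zero_add] at e
    rcases unit b y Ny (e ▸ Nz) with rfl | rfl <;> simp [e]
  have h1 := coeff_one hN L hbas x y hx hy Nx Ny hd a b (e ▸ hz) (e ▸ Nz) hb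
  have h2 := coeff_one hN L hbas y x hy hx Ny Nx hdyx b a
    (by rw [add_comm]; exact e ▸ hz) (by rw [add_comm]; exact e ▸ Nz) ha
  have E : z = (a : ℝ) • x + (b : ℝ) • y := by
    rw [e]
    simp only [← Int.cast_smul_eq_zsmul ℝ]
  rcases h1 with rfl | rfl <;> rcases h2 with rfl | rfl
  · right; right; right; right; left
    rw [E]; push_cast; module
  · right; right; right; right; right; right; right
    rw [E]; push_cast; module
  · right; right; right; right; right; right; left
    rw [E]; push_cast; module
  · right; right; right; right; right; left
    rw [E]; push_cast; module

lemma six_core {N} (hN : NormLike N) (L : Set (Fin 2 → ℝ))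
    (hneg : ∀ x ∈ L, -x ∈ L) (hadd : ∀ x ∈ L, ∀ y ∈ L, x + y ∈ L)
    (hbas : ∀ p ∈ L, ∀ q ∈ L, N p = 1 → N q = 1 → d2 p q ≠ 0 → L = zspan p q)
    (x y : Fin 2 → ℝ) (hx : x ∈ L) (hy : y ∈ L) (Nx : N x = 1) (Ny : N y = 1)
    (hd : d2 x y ≠ 0) (Nxy : N (x + y) = 1) :
    ∃ p q r : Fin 2 → ℝ, p = q - r ∧
      L ∩ {z | N z = 1} = ({p, -p, q, -q, r, -r} : Set (Fin 2 → ℝ)) ∧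
      ({p, -p, q, -q, r, -r} : Set (Fin 2 → ℝ)).ncard = 6 ∧
      L = zspan p q ∧ L = zspan p r ∧ L = zspan q r := by
  have hxy := hadd x hx y hy
  have hd1 : d2 x (x + y) ≠ 0 := by
    have : d2 x (x + y) = d2 x y := by simp [d2]; ring
    rwa [this]
  have hd2 : d2 (x + y) y ≠ 0 := by
    have : d2 (x + y) y = d2 x y := by simp [d2]; ring
    rwa [this]
  refine ⟨x, x + y, y, by simp, ?_, ?_, hbas _ hx _ hxy Nx Nxy hd1, hbas _ hx _ hy Nx Ny hd,
    hbas _ hxy _ hy Nxy Ny hd2⟩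
  · ext z
    simp only [Set.mem_inter_iff, Set.mem_setOf_eq, Set.mem_insert_iff, Set.mem_singleton_iff]
    constructor
    · rintro ⟨hz, Nz⟩
      have no : N (x - y) ≠ 1 := by
        intro Nm
        have hm : x - y ∈ L := by
          rw [sub_eq_add_neg]
          exact hadd x hx _ (hneg y hy)
        have hd3 : d2 (x + y) (x - y) ≠ 0 := by
          have : d2 (x + y) (x - y) = -2 * d2 x y := by simp [d2]; ring
          rw [this]
          exact mul_ne_zero (by norm_num) hd
        have h1 := hbas _ hxy _ hm Nxy Nm hd3
        have h2 : x ∈ zspan (x + y) (x - y) := h1 ▸ hx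
        obtain ⟨m, n, e⟩ := h2
        have e' : (1:ℝ) • x + (0:ℝ) • y = ((m + n : ℤ) : ℝ) • x + ((m - n : ℤ) : ℝ) • y := by
          simp only [← Int.cast_smul_eq_zsmul ℝ] at e
          rw [zero_smul, one_smul, add_zero]
          refine e.trans ?_
          push_cast
          module
        have h3 := d2_unique x y hd _ _ _ _ e'
        have h4 : m + n = 1 := by exact_mod_cast h3.1.symm
        have h5 : m - n = 0 := by exact_mod_cast h3.2.symm
        omega
      rcases classify hN L hbas x y hx hy Nx Ny hd z hz Nz with h | h | h | h | h | h | h | h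
      · tauto
      · tauto
      · tauto
      · tauto
      · tauto
      · tauto
      · exact absurd (h ▸ Nz) no
      · rw [h, hN.neg] at Nz
        exact absurd Nz no
    · rintro (rfl | rfl | rfl | rfl | rfl | rfl)
      · exact ⟨hx, Nx⟩
      · exact ⟨hneg _ hx, by rw [hN.neg, Nx]⟩
      · exact ⟨hxy, Nxy⟩
      · exact ⟨hneg _ hxy, by rw [hN.neg, Nxy]⟩
      · exact ⟨hy, Ny⟩
      · exact ⟨hneg _ hy, by rw [hN.neg, Ny]⟩
  · let F : ℝ × ℝ → (Fin 2 → ℝ) := fun c => c.1 • x + c.2 • y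
    have hF : Function.Injective F := by
      rintro ⟨a, b⟩ ⟨c, d⟩ h
      have := d2_unique x y hd a b c d h
      rw [this.1, this.2]
    have e : ({x, -x, x + y, -(x + y), y, -y} : Set (Fin 2 → ℝ)) =
        F '' (({((1:ℚ),(0:ℚ)), (-1,0), (1,1), (-1,-1), (0,1), (0,-1)} : Finset (ℚ × ℚ)).image
          (fun c => ((c.1 : ℝ), (c.2 : ℝ))) : Finset (ℝ × ℝ)) := by
      simp only [Finset.image_insert, Finset.image_singleton, Finset.coe_insert,
        Finset.coe_singleton, Set.image_insert_eq, Set.image_singleton, F]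
      norm_num [add_comm]
    rw [e, Set.ncard_image_of_injective _ hF, Set.ncard_coe_finset,
      Finset.card_image_of_injective]
    · decide +kernel
    · rintro ⟨a, b⟩ ⟨c, d⟩ h
      simp only [Prod.mk.injEq, Rat.cast_inj] at h
      rw [h.1, h.2]

theorem stmt19 (B : Set (Fin 2 → ℝ)) (hopen : IsOpen B)
    (hbdd : Bornology.IsBounded B) (hconv : Convex ℝ B)
    (hsymm : ∀ x ∈ B, -x ∈ B) (h0 : (0 : Fin 2 → ℝ) ∈ B)
    (hnpar : ¬ IsParallelogram B)
    (M : Matrix (Fin 2) (Fin 2) ℝ) (hM : M.det ≠ 0)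
    (hadm : latticeOf M ∩ B = {0}) (hcrit : |M.det| = critDet B) :
    ∃ p q r : Fin 2 → ℝ, p = q - r ∧
      latticeOf M ∩ frontier B = ({p, -p, q, -q, r, -r} : Set (Fin 2 → ℝ)) ∧
      ({p, -p, q, -q, r, -r} : Set (Fin 2 → ℝ)).ncard = 6 ∧
      latticeOf M = zspan p q ∧ latticeOf M = zspan p r ∧ latticeOf M = zspan q r := by
  have hB0 : B ∈ nhds (0 : Fin 2 → ℝ) := hopen.mem_nhds h0
  have habs : Absorbent ℝ B := absorbent_nhds_zero hB0
  have hN : NormLike (gauge B) := by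
    refine ⟨gauge_add_le hconv habs, fun c x => ?_⟩
    rcases le_total 0 c with h | h
    · rw [gauge_smul_of_nonneg h, abs_of_nonneg h, smul_eq_mul]
    · rw [abs_of_nonpos h, ← gauge_neg hsymm, ← neg_smul, gauge_smul_of_nonneg (neg_nonneg.2 h),
        smul_eq_mul]
  have hB : ∀ x, x ∈ B ↔ gauge B x < 1 := by
    intro x
    rw [gauge_lt_one_iff_mem_interior hconv hB0, hopen.interior_eq]
  have hcl : ∀ x, gauge B x ≤ 1 ↔ x ∈ closure B := fun x =>
    gauge_le_one_iff_mem_closure hconv hB0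
  have hfr : frontier B = {z | gauge B z = 1} := by
    ext x
    exact (gauge_eq_one_iff_mem_frontier hconv hB0).symm
  have hL : ∀ x ∈ latticeOf M, ∀ y ∈ latticeOf M, ∀ a b : ℤ, a • x + b • y ∈ latticeOf M := by
    rintro _ ⟨k, rfl⟩ _ ⟨l, rfl⟩ a b
    refine ⟨a • k + b • l, ?_⟩
    simp only [← Int.cast_smul_eq_zsmul ℝ]
    rw [← Matrix.mulVec_smul, ← Matrix.mulVec_smul, ← Matrix.mulVec_add]
    congr 1
    ext i
    simp
  have hadm' : ∀ x ∈ latticeOf M, x ≠ 0 → 1 ≤ gauge B x := by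
    intro x hx hx0
    by_contra! h
    have : x ∈ latticeOf M ∩ B := ⟨hx, (hB x).2 h⟩
    rw [hadm] at this
    exact hx0 this
  have hneg : ∀ x ∈ latticeOf M, -x ∈ latticeOf M := by
    intro x hx
    simpa using hL x hx x hx (-1) 0
  have hadd : ∀ x ∈ latticeOf M, ∀ y ∈ latticeOf M, x + y ∈ latticeOf M := by
    intro x hx y hy
    simpa using hL x hx y hy 1 1
  have hbas : ∀ p ∈ latticeOf M, ∀ q ∈ latticeOf M, gauge B p = 1 → gauge B q = 1 →
      d2 p q ≠ 0 → latticeOf M = zspan p q := fun p hp q hq Np Nq hd =>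
    basis_of hN (latticeOf M) hL hadm' (par_of B hB hnpar) p q hp hq Np Nq hd
  obtain ⟨x, hx, y, hy, hxc, hyc, hd⟩ := exists_pair B hbdd h0 M hM hadm hcrit
  have Nx : gauge B x = 1 := by
    refine le_antisymm ((hcl x).2 hxc) (hadm' x hx ?_)
    rintro rfl
    simp [d2] at hd
  have Ny : gauge B y = 1 := by
    refine le_antisymm ((hcl y).2 hyc) (hadm' y hy ?_)
    rintro rfl
    simp [d2] at hd
  obtain ⟨z, hz, hzc, z0, z1, z2, z3, z4⟩ := exists_third B hopen hconv hsymm hbdd h0 M hM hadm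
    hcrit x y hd (by rw [hB, Nx]; simp) (by rw [hB, Ny]; simp)
  have Nz : gauge B z = 1 := le_antisymm ((hcl z).2 hzc) (hadm' z hz z0)
  rw [hfr]
  rcases classify hN _ hbas x y hx hy Nx Ny hd z hz Nz with h | h | h | h | h | h | h | h
  · exact absurd h z1
  · exact absurd h z2
  · exact absurd h z3
  · exact absurd h z4
  · exact six_core hN _ hneg hadd hbas x y hx hy Nx Ny hd (h ▸ Nz)
  · rw [h, hN.neg] at Nz
    exact six_core hN _ hneg hadd hbas x y hx hy Nx Ny hd Nz
  all_goals
    have Nxy : gauge B (x + -y) = 1 := by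
      rw [← sub_eq_add_neg]
      first
      | (rw [h, hN.neg] at Nz; exact Nz)
      | (rw [h] at Nz; exact Nz)
    have hd' : d2 x (-y) ≠ 0 := by
      have : d2 x (-y) = - d2 x y := by simp [d2]; ring
      rw [this]
      exact neg_ne_zero.2 hd
    exact six_core hN _ hneg hadd hbas x (-y) hx (hneg y hy) Nx (by rw [hN.neg, Ny]) hd' Nxy
end
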